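/- Let p be a prime, m, e positive integers, and b an integer with 2 ≤ b < p^e. Then for every i with 1 ≤ i ≤ p^{e−1}, the cyclic code C_i = ⟨(x−1)^i⟩ ⊆ 𝔽_{p^m}[x]/⟨x^{p^e}−1⟩ satisfies b + 1 ≤ d_b(C_i) ≤ 2b. -/

import Mathlib

open Polynomial

/-- The `b`-symbol read vector of `x ∈ Ξ^n`: its `i`-th entry is the `b`-tuple
`(x_i, x_{i+1}, …, x_{i+b-1})`, indices modulo `n`. -/
def piB {Ξ : Type*} {n : ℕ} (b : ℕ) (x : Fin n → Ξ) : Fin n → (Fin b → Ξ) :=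
  fun i j => x ⟨((i : ℕ) + (j : ℕ)) % n, Nat.mod_lt _ i.pos⟩

/-- The cyclic code `C_i = ⟨(x-1)^i⟩ ⊆ 𝔽_{p^m}[x]/⟨x^{p^e}-1⟩` of length `p^e`
over `𝔽_{p^m}`, viewed as the set of coefficient vectors `c ∈ 𝔽_{p^m}^{p^e}`
whose associated polynomial is congruent to a multiple of `(x-1)^i` modulo
`x^{p^e} - 1`. -/
noncomputable def Ccode (p m e : ℕ) [Fact p.Prime] (i : ℕ) :
    Set (Fin (p ^ e) → GaloisField p m) :=
  {c | ∃ f : Polynomial (GaloisField p m),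
    (X ^ (p ^ e) - 1 : Polynomial (GaloisField p m)) ∣
      ((∑ j : Fin (p ^ e), Polynomial.C (c j) * X ^ (j : ℕ)) - (X - 1) ^ i * f)}

/-- The minimum `b`-symbol distance of a code `C ⊆ F^n`. -/
noncomputable def dBcode {F : Type*} {n : ℕ} (b : ℕ) (Cc : Set (Fin n → F)) : ℕ :=
  letI := Classical.decEq F
  sInf {d | ∃ x ∈ Cc, ∃ y ∈ Cc, x ≠ y ∧ d = hammingDist (piB b x) (piB b y)}

/-! Write `S` for the set of positions where two words `x`, `y` of length `n` differ. The windows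
starting at `k` differ iff `k ∈ S - {0, …, b - 1}` in `ℤ/n`, so `d_b(x, y) ≤ b * #S`. Conversely, a
nonempty proper subset of `ℤ/n` is never stable under translation by a generator, so each unit
increase of `b` adds a position, and `d_b(x, y) ≥ min n (#S + b - 1)`. In characteristic
`p`, the code generated by `(x - 1)^i` with `1 ≤ i ≤ p^k < n` has minimal Hamming distance `2`: the
coefficients of a codeword sum to zero, and `x^(p^k) - 1 = (x - 1)^(p^k)` has weight two. -/

section Translates

open Finset
open scoped Pointwise

variable {G : Type*} [AddCommGroup G] [Fintype G] {g : G} {s : Finset G}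

lemma exists_mem_add_notMem_of_zmultiples_eq_top (hg : AddSubgroup.zmultiples g = ⊤)
    (hs : s.Nonempty) (hs' : s ≠ univ) : ∃ a ∈ s, a + g ∉ s := by
  classical
  by_contra! hstable
  have hg_mem : g ∈ AddAction.stabilizer G s :=
    AddAction.mem_stabilizer_finset'.2 fun a ha ↦ by
      simpa only [vadd_eq_add, add_comm g] using hstable a ha
  have htop : AddAction.stabilizer G s = ⊤ :=
    top_unique <| hg ▸ AddSubgroup.zmultiples_le_of_mem hg_mem
  obtain ⟨a, ha⟩ := hs
  refine hs' <| eq_univ_iff_forall.2 fun c ↦ ?_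
  have hc : c - a ∈ AddAction.stabilizer G s := htop ▸ AddSubgroup.mem_top _
  simpa only [vadd_eq_add, sub_add_cancel] using AddAction.mem_stabilizer_finset'.1 hc ha

lemma min_card_le_card_add_image_nsmul [DecidableEq G] (hg : AddSubgroup.zmultiples g = ⊤)
    (hs : s.Nonempty) (k : ℕ) :
    min (Fintype.card G) (#s + k) ≤ #(s + (range (k + 1)).image (· • g)) := by
  induction k with
  | zero => simp
  | succ k ih =>
    set A := s + (range (k + 1)).image (· • g)
    set B := s + (range (k + 2)).image (· • g)
    have hAB : A ⊆ B :=
      add_subset_add_left <| image_subset_image <| range_subset_range.2 (k + 1).le_succ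
    by_cases hAuniv : A = univ
    · have hBuniv : B = univ := univ_subset_iff.1 (hAuniv ▸ hAB)
      simp [hBuniv]
    · have hAne : A.Nonempty := hs.add (by simp)
      obtain ⟨a, haA, hagA⟩ := exists_mem_add_notMem_of_zmultiples_eq_top hg hAne hAuniv
      have hagB : a + g ∈ B := by
        obtain ⟨c, hc, _, ht, rfl⟩ := mem_add.1 haA
        obtain ⟨j, hj, rfl⟩ := mem_image.1 ht
        rw [add_assoc, ← succ_nsmul]
        exact add_mem_add hc <| mem_image_of_mem _ <| by simpa using hj
      have hlt : #A < #B := card_lt_card <| (ssubset_iff_of_subset hAB).2 ⟨_, hagB, hagA⟩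
      omega

end Translates

section HammingDistance

open Finset

variable {ι M : Type*} [Fintype ι] [DecidableEq M]

lemma two_le_hammingDist_of_sum_eq [AddCancelCommMonoid M] {x y : ι → M}
    (hsum : ∑ j, x j = ∑ j, y j) (hxy : x ≠ y) : 2 ≤ hammingDist x y := by
  classical
  obtain ⟨u, hu⟩ := Function.ne_iff.1 hxy
  by_contra! hlt
  have heq : ∀ v, v ≠ u → x v = y v := fun v hvu ↦ by
    by_contra hv
    refine hlt.not_ge <| one_lt_card.2 ⟨v, ?_, u, ?_, hvu⟩ <;> simpa
  have hrest : ∑ v ∈ {u}ᶜ, x v = ∑ v ∈ {u}ᶜ, y v :=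
    sum_congr rfl fun v hv ↦ heq v <| by simpa using hv
  rw [Fintype.sum_eq_add_sum_compl u, Fintype.sum_eq_add_sum_compl u, hrest] at hsum
  exact hu <| add_right_cancel hsum

lemma hammingNorm_single_sub_single_le [DecidableEq ι] [AddGroup M] (u v : ι) (a b : M) :
    hammingNorm (Pi.single u a - Pi.single v b : ι → M) ≤ 2 := by
  refine (card_le_card (t := {u, v}) fun w hw ↦ ?_).trans card_le_two
  contrapose! hw
  simp_all

end HammingDistance

section SymbolDistance

open Finset
open scoped Pointwise

variable {F : Type*} {n b : ℕ} {x y : Fin n → F}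

lemma fin_val_nsmul_one [NeZero n] (j : ℕ) : ((j • (1 : Fin n) : Fin n) : ℕ) = j % n := by
  open scoped Fin.NatCast in rw [nsmul_one, Fin.val_natCast]

lemma fin_zmultiples_neg_one [NeZero n] : AddSubgroup.zmultiples (-1 : Fin n) = ⊤ := by
  refine (AddSubgroup.eq_top_iff' _).2 fun k ↦ ?_
  have hk : (k : ℕ) • (1 : Fin n) = k :=
    Fin.ext <| by rw [fin_val_nsmul_one, Nat.mod_eq_of_lt k.isLt]
  rw [AddSubgroup.zmultiples_neg, ← hk]
  exact AddSubgroup.nsmul_mem_zmultiples _ _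

lemma piB_apply [NeZero n] (k : Fin n) (j : Fin b) :
    piB b x k j = x (k + (j : ℕ) • (1 : Fin n)) := by
  refine congrArg x <| Fin.ext ?_
  rw [Fin.val_add, fin_val_nsmul_one, Nat.add_mod_mod]

variable [DecidableEq F]

lemma filter_piB_ne_eq_add [NeZero n] :
    ({k | piB b x k ≠ piB b y k} : Finset (Fin n)) =
      ({k | x k ≠ y k} : Finset (Fin n)) + (range b).image (· • (-1 : Fin n)) := by
  ext k
  simp only [mem_filter_univ, mem_add, mem_image, mem_range, Function.ne_iff, piB_apply]
  constructor
  · rintro ⟨j, hj⟩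
    exact ⟨_, hj, _, ⟨j, j.isLt, rfl⟩, by rw [smul_neg, add_neg_cancel_right]⟩
  · rintro ⟨u, hu, _, ⟨j, hj, rfl⟩, rfl⟩
    exact ⟨⟨j, hj⟩, by rwa [smul_neg, neg_add_cancel_right]⟩

lemma hammingDist_piB_le : hammingDist (piB b x) (piB b y) ≤ b * hammingDist x y := by
  rcases n with - | n
  · simp [hammingDist]
  calc hammingDist (piB b x) (piB b y)
      ≤ hammingDist x y * #((range b).image (· • (-1 : Fin (n + 1)))) := by
        rw [hammingDist, filter_piB_ne_eq_add]
        exact card_add_le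
    _ ≤ hammingDist x y * b := Nat.mul_le_mul_left _ <| card_image_le.trans_eq (card_range b)
    _ = b * hammingDist x y := Nat.mul_comm _ _

lemma min_le_hammingDist_piB (hb : b ≠ 0) (hxy : x ≠ y) :
    min n (hammingDist x y + b - 1) ≤ hammingDist (piB b x) (piB b y) := by
  obtain ⟨k, rfl⟩ := Nat.exists_eq_add_one_of_ne_zero hb
  obtain ⟨u, hu⟩ := Function.ne_iff.1 hxy
  have : NeZero n := ⟨u.pos.ne'⟩
  have hgrowth := min_card_le_card_add_image_nsmul (s := {j | x j ≠ y j}) fin_zmultiples_neg_one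
    ⟨u, (mem_filter_univ u).2 hu⟩ k
  rwa [← filter_piB_ne_eq_add, Fintype.card_fin] at hgrowth

lemma dBcode_eq_sInf (Cc : Set (Fin n → F)) :
    dBcode b Cc =
      sInf {d | ∃ x ∈ Cc, ∃ y ∈ Cc, x ≠ y ∧ d = hammingDist (piB b x) (piB b y)} := by
  unfold dBcode
  congr!

lemma dBcode_le {Cc : Set (Fin n → F)} (hx : x ∈ Cc) (hy : y ∈ Cc) (hxy : x ≠ y) :
    dBcode b Cc ≤ b * hammingDist x y := by
  rw [dBcode_eq_sInf]
  refine (Nat.sInf_le ?_).trans hammingDist_piB_le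
  exact ⟨x, hx, y, hy, hxy, rfl⟩

lemma min_le_dBcode {Cc : Set (Fin n → F)} {d : ℕ} (hb : b ≠ 0) (hCc : Cc.Nontrivial)
    (hd : Cc.Pairwise fun x y ↦ d ≤ hammingDist x y) : min n (d + b - 1) ≤ dBcode b Cc := by
  rw [dBcode_eq_sInf]
  obtain ⟨x₀, hx₀, y₀, hy₀, hne⟩ := hCc
  refine le_csInf ⟨_, x₀, hx₀, y₀, hy₀, hne, rfl⟩ ?_
  rintro _ ⟨x, hx, y, hy, hxy, rfl⟩
  calc min n (d + b - 1)
      ≤ min n (hammingDist x y + b - 1) := by gcongr; exact hd hx hy hxy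
    _ ≤ hammingDist (piB b x) (piB b y) := min_le_hammingDist_piB hb hxy

end SymbolDistance

section CyclicCode

variable {R : Type*} [CommRing R] {n : ℕ}

/-- The cyclic code `⟨(x - 1)^i⟩ ⊆ R[x]/⟨x^n - 1⟩` of arbitrary length `n` over a commutative ring
`R`, as a set of coefficient vectors. It is encoded as in `Ccode`, which is the case `n = p ^ e`,
`R = 𝔽_{p^m}`. -/
def xSubOnePowCode (R : Type*) [CommRing R] (n i : ℕ) : Set (Fin n → R) :=
  {c | ∃ f : R[X], (X ^ n - 1 : R[X]) ∣ (∑ j : Fin n, C (c j) * X ^ (j : ℕ)) - (X - 1) ^ i * f}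

lemma zero_mem_xSubOnePowCode (i : ℕ) : 0 ∈ xSubOnePowCode R n i := ⟨0, by simp⟩

lemma sum_eq_zero_of_mem_xSubOnePowCode {i : ℕ} (hi : i ≠ 0) {c : Fin n → R}
    (hc : c ∈ xSubOnePowCode R n i) : ∑ j, c j = 0 := by
  obtain ⟨f, q, hq⟩ := hc
  simpa [eval_finsetSum, hi] using congrArg (eval 1) hq

lemma single_sub_single_mem_xSubOnePowCode (p : ℕ) [ExpChar R p] {i k : ℕ} (hi : i ≤ p ^ k)
    (hk : p ^ k < n) :
    (Pi.single ⟨p ^ k, hk⟩ 1 - Pi.single ⟨0, Nat.zero_lt_of_lt hk⟩ 1 : Fin n → R) ∈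
      xSubOnePowCode R n i := by
  have hfactor : (X - 1 : R[X]) ^ i * (X - 1) ^ (p ^ k - i) = X ^ p ^ k - 1 := by
    rw [← pow_add, Nat.add_sub_cancel' hi, sub_pow_expChar_pow, one_pow]
  refine ⟨(X - 1) ^ (p ^ k - i), ?_⟩
  rw [hfactor]
  simp [sub_mul, Finset.sum_sub_distrib, Pi.single_apply, apply_ite C]

theorem b_distance_Ci_bounds_general (p : ℕ) [ExpChar R p] {b i k : ℕ}
    (hb : b ≠ 0) (hbn : b < n) (hi : i ≠ 0) (hik : i ≤ p ^ k) (hkn : p ^ k < n) :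
    b + 1 ≤ dBcode b (xSubOnePowCode R n i) ∧ dBcode b (xSubOnePowCode R n i) ≤ 2 * b := by
  classical
  have : Nontrivial R := by
    cases ‹ExpChar R p› with
    | zero => infer_instance
    | prime hp => exact CharP.nontrivial_of_char_ne_one hp.ne_one
  set u : Fin n := ⟨p ^ k, hkn⟩
  set v : Fin n := ⟨0, Nat.zero_lt_of_lt hkn⟩
  set c : Fin n → R := Pi.single u 1 - Pi.single v 1
  have huv : u ≠ v := Fin.ne_of_val_ne (pow_pos (expChar_pos R p) k).ne'
  have hc : c ∈ xSubOnePowCode R n i := single_sub_single_mem_xSubOnePowCode p hik hkn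
  have h0 : 0 ∈ xSubOnePowCode R n i := zero_mem_xSubOnePowCode i
  have hc0 : c ≠ 0 := Function.ne_iff.2 ⟨u, by simp [c, huv]⟩
  constructor
  · have hdist : (xSubOnePowCode R n i).Pairwise fun x y ↦ 2 ≤ hammingDist x y :=
      fun x hx y hy ↦ two_le_hammingDist_of_sum_eq <|
        (sum_eq_zero_of_mem_xSubOnePowCode hi hx).trans
          (sum_eq_zero_of_mem_xSubOnePowCode hi hy).symm
    have hmin := min_le_dBcode hb ⟨c, hc, 0, h0, hc0⟩ hdist
    omega
  · calc dBcode b (xSubOnePowCode R n i)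
        ≤ b * hammingDist c 0 := dBcode_le hc h0 hc0
      _ ≤ b * 2 := by
        rw [hammingDist_zero_right]
        exact Nat.mul_le_mul_left b <| hammingNorm_single_sub_single_le u v 1 1
      _ = 2 * b := Nat.mul_comm b 2

end CyclicCode

/-- For `2 ≤ b < p^e` and every `1 ≤ i ≤ p^{e-1}`, the cyclic code
`C_i = ⟨(x-1)^i⟩` satisfies `b + 1 ≤ d_b(C_i) ≤ 2b`. -/
theorem b_distance_Ci_bounds (p m e : ℕ) [Fact p.Prime] (hm : 0 < m)
    (he : 0 < e) (b : ℕ) (hb2 : 2 ≤ b) (hb : b < p ^ e)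
    (i : ℕ) (hi1 : 1 ≤ i) (hi2 : i ≤ p ^ (e - 1)) :
    b + 1 ≤ dBcode b (Ccode p m e i) ∧ dBcode b (Ccode p m e i) ≤ 2 * b := by
  have hk : p ^ (e - 1) < p ^ e := Nat.pow_lt_pow_right (Fact.out : p.Prime).one_lt (by omega)
  exact b_distance_Ci_bounds_general p (by omega) hb (by omega) hi2 hk
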